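/- Let N ≥ 1, let A and B be N×N Hermitian complex matrices such that ⟨Aw, w⟩ ≠ 0 for every nonzero w ∈ ℂ^N which is an eigenvector of B (i.e. Bw = μw for some μ ∈ ℝ). Let h(p) = e^{-ip}A + e^{ip}A* + B, and suppose λ : ℝ → ℝ and W : ℝ → ℂ^N are differentiable functions such that for all p ∈ ℝ, ‖W(p)‖ = 1 and h(p)W(p) = λ(p)W(p). Then λ'(π/2) ≠ 0. -/

import Mathlib

open Matrix Complex

/-!
By the Hellmann–Feynman formula, a continuous branch of eigenvectors `W` of a family of symmetric
operators `T` has an eigenvalue with derivative `⟪T' W, W⟫ / ‖W‖²`: testing the eigenvalue equation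
at `p` against `W p₀` gives `⟪(T p - T p₀) (W p₀), W p⟫ = (lam p - lam p₀) ⟪W p₀, W p⟫`, and `W`
need not be differentiated. For Hermitian `A` the family is `h(p) = 2 cos p • A + B`, so at `π / 2`
the vector `W` is an eigenvector of `B` and the derivative is `-2 ⟪A W, W⟫ / ‖W‖²`.
-/

section Eigenbranch

open Filter Topology
open scoped InnerProductSpace

variable {𝕜 E : Type*} [RCLike 𝕜] [NormedAddCommGroup E] [InnerProductSpace 𝕜 E]

theorem inner_sub_apply_eq_sub_mul_inner {S T : E →ₗ[𝕜] E} (hT : T.IsSymmetric) {a b : ℝ}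
    {v w : E} (hv : S v = (a : 𝕜) • v) (hw : T w = (b : 𝕜) • w) :
    ⟪T v - S v, w⟫_𝕜 = ((b - a : ℝ) : 𝕜) * ⟪v, w⟫_𝕜 := by
  rw [inner_sub_left, hT v w, hw, hv, inner_smul_right, inner_smul_left, RCLike.conj_ofReal,
    RCLike.ofReal_sub, sub_mul]

theorem slope_eigenvalue_eq_re_inner_div_inner [NormedSpace ℝ E] {T : ℝ → E →ₗ[𝕜] E}
    {lam : ℝ → ℝ} {p₀ p : ℝ} {v w : E} (hT : (T p).IsSymmetric)
    (hv : T p₀ v = (lam p₀ : 𝕜) • v) (hw : T p w = (lam p : 𝕜) • w) (hvw : ⟪v, w⟫_𝕜 ≠ 0) :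
    slope lam p₀ p = RCLike.re (⟪slope (fun q => T q v) p₀ p, w⟫_𝕜 / ⟪v, w⟫_𝕜) := by
  rw [slope_def_module, slope_def_module, inner_smul_left_eq_smul,
    inner_sub_apply_eq_sub_mul_inner hT hv hw, smul_div_assoc, mul_div_cancel_right₀ _ hvw,
    RCLike.smul_re, RCLike.ofReal_re, smul_eq_mul]

theorem hasDerivAt_eigenvalue_of_isSymmetric [NormedSpace ℝ E] {T : ℝ → E →ₗ[𝕜] E}
    {lam : ℝ → ℝ} {W : ℝ → E} {p₀ : ℝ} {T' : E} (hT : ∀ᶠ p in 𝓝 p₀, (T p).IsSymmetric)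
    (hT' : HasDerivAt (fun p => T p (W p₀)) T' p₀) (hW : ContinuousAt W p₀) (hW₀ : W p₀ ≠ 0)
    (heig : ∀ᶠ p in 𝓝 p₀, T p (W p) = (lam p : 𝕜) • W p) :
    HasDerivAt lam (RCLike.re ⟪T', W p₀⟫_𝕜 / ‖W p₀‖ ^ 2) p₀ := by
  have overlap : Tendsto (fun p => ⟪W p₀, W p⟫_𝕜) (𝓝 p₀) (𝓝 ⟪W p₀, W p₀⟫_𝕜) :=
    tendsto_const_nhds.inner hW
  have overlap_ne : ⟪W p₀, W p₀⟫_𝕜 ≠ 0 := inner_self_ne_zero.mpr hW₀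
  have slope_eq : slope lam p₀ =ᶠ[𝓝 p₀] fun p =>
      RCLike.re (⟪slope (fun q => T q (W p₀)) p₀ p, W p⟫_𝕜 / ⟪W p₀, W p⟫_𝕜) := by
    filter_upwards [hT, heig, overlap.eventually_ne overlap_ne] with p hTp hp hne
    exact slope_eigenvalue_eq_re_inner_div_inner hTp heig.self_of_nhds hp hne
  have limit_eq : RCLike.re ⟪T', W p₀⟫_𝕜 / ‖W p₀‖ ^ 2 =
      RCLike.re (⟪T', W p₀⟫_𝕜 / ⟪W p₀, W p₀⟫_𝕜) := by
    rw [inner_self_eq_norm_sq_to_K, ← RCLike.ofReal_pow, RCLike.div_re_ofReal]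
  rw [hasDerivAt_iff_tendsto_slope, limit_eq]
  refine Tendsto.congr' (slope_eq.filter_mono nhdsWithin_le_nhds).symm ?_
  exact (RCLike.continuous_re.tendsto _).comp
    ((hT'.tendsto_slope.inner (hW.mono_left nhdsWithin_le_nhds)).div
      (overlap.mono_left nhdsWithin_le_nhds) overlap_ne)

theorem hasDerivAt_eigenvalue_smul_add {A B : E →ₗ[𝕜] E} (hA : A.IsSymmetric)
    (hB : B.IsSymmetric) {f lam : ℝ → ℝ} {W : ℝ → E} {p₀ f' : ℝ} (hf : HasDerivAt f f' p₀)
    (hW : ContinuousAt W p₀) (hW₀ : W p₀ ≠ 0)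
    (heig : ∀ᶠ p in 𝓝 p₀, (f p : 𝕜) • A (W p) + B (W p) = (lam p : 𝕜) • W p) :
    HasDerivAt lam (f' * RCLike.re ⟪A (W p₀), W p₀⟫_𝕜 / ‖W p₀‖ ^ 2) p₀ := by
  let : NormedSpace ℝ E := NormedSpace.restrictScalars ℝ 𝕜 E
  have symm (p : ℝ) : ((f p : 𝕜) • A + B).IsSymmetric :=
    (hA.smul (RCLike.conj_ofReal _)).add hB
  have deriv_apply : HasDerivAt (fun p => ((f p : 𝕜) • A + B) (W p₀)) (f' • A (W p₀)) p₀ := by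
    simpa only [LinearMap.add_apply, LinearMap.smul_apply, RCLike.real_smul_eq_coe_smul (K := 𝕜)]
      using (hf.smul_const (A (W p₀))).add_const (B (W p₀))
  simpa only [inner_smul_left_eq_smul, RCLike.smul_re] using
    hasDerivAt_eigenvalue_of_isSymmetric (.of_forall symm) deriv_apply hW hW₀ heig

theorem deriv_ne_zero_at_pi_div_two_general {A B : E →ₗ[𝕜] E} (hA : A.IsSymmetric)
    (hB : B.IsSymmetric)
    (hAB : ∀ (μ : ℝ) (w : E), Module.End.HasEigenvector B (μ : 𝕜) w → ⟪A w, w⟫_𝕜 ≠ 0)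
    {lam : ℝ → ℝ} {W : ℝ → E} (hW : ContinuousAt W (Real.pi / 2)) (hW₀ : W (Real.pi / 2) ≠ 0)
    (heig : ∀ᶠ p in 𝓝 (Real.pi / 2),
      ((2 * Real.cos p : ℝ) : 𝕜) • A (W p) + B (W p) = (lam p : 𝕜) • W p) :
    deriv lam (Real.pi / 2) ≠ 0 := by
  have eigenvector :
      Module.End.HasEigenvector B (lam (Real.pi / 2) : 𝕜) (W (Real.pi / 2)) := by
    refine ⟨Module.End.mem_eigenspace_iff.mpr ?_, hW₀⟩
    simpa using heig.self_of_nhds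
  have re_inner_ne : RCLike.re ⟪A (W (Real.pi / 2)), W (Real.pi / 2)⟫_𝕜 ≠ 0 := by
    rw [← RCLike.ofReal_ne_zero (K := 𝕜), hA.coe_re_inner_apply_self]
    exact hAB _ _ eigenvector
  have deriv_cos : HasDerivAt (fun p => 2 * Real.cos p) (-2) (Real.pi / 2) := by
    simpa using (Real.hasDerivAt_cos (Real.pi / 2)).const_mul 2
  rw [(hasDerivAt_eigenvalue_smul_add hA hB deriv_cos hW hW₀ heig).deriv]
  exact div_ne_zero (mul_ne_zero (by norm_num) re_inner_ne) (by positivity)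

end Eigenbranch

theorem exp_smul_add_exp_smul_conjTranspose {n : Type*} {A : Matrix n n ℂ} (hA : A.IsHermitian)
    (p : ℝ) :
    Complex.exp (-((p : ℂ) * Complex.I)) • A + Complex.exp ((p : ℂ) * Complex.I) • Aᴴ =
      ((2 * Real.cos p : ℝ) : ℂ) • A := by
  rw [hA.eq, ← add_smul, Complex.ofReal_mul, Complex.ofReal_ofNat, Complex.ofReal_cos,
    Complex.two_cos, neg_mul, add_comm]

/-- Let `A, B` be Hermitian with `⟨Aw, w⟩ ≠ 0` for every nonzero
eigenvector `w` of `B`. Then a differentiable normalized eigenpair branch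
`(λ(p), W(p))` of `h(p) = e^{-ip}A + e^{ip}Aᴴ + B` satisfies `λ'(π/2) ≠ 0`. -/
theorem deriv_ne_zero_at_pi_div_two (N : ℕ) (hN : 1 ≤ N)
    (A B : Matrix (Fin N) (Fin N) ℂ)
    (hA : A.IsHermitian) (hB : B.IsHermitian)
    (hAB : ∀ w : EuclideanSpace ℂ (Fin N), w ≠ 0 →
      (∃ μ : ℝ, B *ᵥ w = (μ : ℂ) • w) →
      @inner ℂ (EuclideanSpace ℂ (Fin N)) _
        ((WithLp.equiv 2 (Fin N → ℂ)).symm (A *ᵥ w)) w ≠ 0)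
    (lam : ℝ → ℝ) (W : ℝ → EuclideanSpace ℂ (Fin N))
    (hlam : Differentiable ℝ lam) (hW : Differentiable ℝ W)
    (hnorm : ∀ p : ℝ, ‖W p‖ = 1)
    (heig : ∀ p : ℝ,
      (Complex.exp (-((p : ℂ) * Complex.I)) • A
        + Complex.exp ((p : ℂ) * Complex.I) • Aᴴ + B) *ᵥ (W p)
      = (lam p : ℂ) • W p) :
    deriv lam (Real.pi / 2) ≠ 0 := by
  have hW₀ : W (Real.pi / 2) ≠ 0 := norm_ne_zero_iff.mp (by simp [hnorm])
  refine deriv_ne_zero_at_pi_div_two_general (isSymmetric_toEuclideanLin_iff.mpr hA)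
    (isSymmetric_toEuclideanLin_iff.mpr hB)
    (fun μ w hw => hAB w hw.2 ⟨μ, congrArg WithLp.ofLp hw.apply_eq_smul⟩)
    hW.continuous.continuousAt hW₀ (.of_forall fun p => WithLp.ofLp_injective 2 ?_)
  simpa [exp_smul_add_exp_smul_conjTranspose hA, add_mulVec, smul_mulVec] using heig p
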